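/- Let Q be a symmetric positive definite k×k matrix partitioned into blocks Q₁₁, Q₁₂, Q₂₁, Q₂₂, let γ ∈ ℝ^{k₂}, and let Z₁ ~ N(0, σ²I_{k₁}) and Z₂ ~ N(0, σ²I_{k₂}) be independent. Then the distribution of B_∞γ + C_∞Z₁ + [1 + exp(2αk₂) exp(−α‖Z₂ + (Q₂₂ − Q₂₁Q₁₁⁻¹Q₁₂)^{1/2}γ‖²/σ²)]⁻¹ · (D_∞Z₂ − B_∞γ) is absolutely continuous with respect to Lebesgue measure on ℝ^k with density f_{∞,γ}(t) = (2πσ²)^{−k/2} det(Q)^{1/2} · exp(−(2σ²)⁻¹‖Q₁₁^{1/2}t₁ + Q₁₁^{−1/2}Q₁₂t₂‖²) · [1 + exp(−ασ⁻²g(‖w‖)² + 2αk₂)]^{k₂} · {1 + 2ασ⁻²g(‖w‖)²[1 + exp(ασ⁻²g(‖w‖)² − 2αk₂)]⁻¹}⁻¹ · exp(−(2σ²)⁻¹‖g(‖w‖)w/‖w‖ − (Q₂₂ − Q₂₁Q₁₁⁻¹Q₁₂)^{1/2}γ‖²), where t = (t₁', t₂')' with t₁ ∈ ℝ^{k₁}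 and w = (Q₂₂ − Q₂₁Q₁₁⁻¹Q₁₂)^{1/2}(t₂ + γ). -/

import Mathlib

open MeasureTheory Matrix Real Filter Topology ENNReal NNReal

noncomputable section

/-- Euclidean norm of a finite tuple. -/
def enorm2 {ι : Type*} [Fintype ι] (v : ι → ℝ) : ℝ := Real.sqrt (∑ i, v i ^ 2)

/-- The `N(0, σ² I)` distribution on `ι → ℝ`, given by its Lebesgue density. -/
def gaussPi (ι : Type*) [Fintype ι] (σ2 : ℝ) : Measure (ι → ℝ) :=
  volume.withDensity fun x => ENNReal.ofReal
    ((2 * π * σ2) ^ (-(Fintype.card ι : ℝ) / 2) * Real.exp (-(enorm2 x) ^ 2 / (2 * σ2)))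

/-- The Lebesgue density of the `N(0, σ² Q⁻¹)` distribution on `ι → ℝ`
(for `Q` symmetric positive definite). -/
def gaussCovDens {ι : Type*} [Fintype ι] [DecidableEq ι] (σ2 : ℝ) (Q : Matrix ι ι ℝ)
    (x : ι → ℝ) : ℝ :=
  (2 * π * σ2) ^ (-(Fintype.card ι : ℝ) / 2) * Real.sqrt Q.det *
    Real.exp (-(x ⬝ᵥ Q.mulVec x) / (2 * σ2))

/-- The `N(0, σ² Q⁻¹)` distribution on `ι → ℝ` (for `Q` symmetric positive definite),
given by its Lebesgue density. -/
def gaussCov {ι : Type*} [Fintype ι] [DecidableEq ι] (σ2 : ℝ) (Q : Matrix ι ι ℝ) :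
    Measure (ι → ℝ) :=
  volume.withDensity fun x => ENNReal.ofReal (gaussCovDens σ2 Q x)

open Classical in
/-- Symmetric positive semidefinite square root (junk value `0` off the psd cone). -/
def msqrt {ι : Type*} [Fintype ι] [DecidableEq ι] (A : Matrix ι ι ℝ) : Matrix ι ι ℝ :=
  if h : A.PosSemidef then
    (h.1.eigenvectorUnitary : Matrix ι ι ℝ) *
      diagonal ((RCLike.ofReal : ℝ → ℝ) ∘ Real.sqrt ∘ h.1.eigenvalues) *
      star (h.1.eigenvectorUnitary : Matrix ι ι ℝ)
  else 0

open Classical in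
/-- Smallest eigenvalue of a symmetric matrix (junk value `0` otherwise). -/
def lamMin {ι : Type*} [Fintype ι] [DecidableEq ι] (A : Matrix ι ι ℝ) : ℝ :=
  if h : A.IsHermitian then ⨅ i, h.eigenvalues i else 0

open Classical in
/-- Largest eigenvalue of a symmetric matrix (junk value `0` otherwise). -/
def lamMax {ι : Type*} [Fintype ι] [DecidableEq ι] (A : Matrix ι ι ℝ) : ℝ :=
  if h : A.IsHermitian then ⨆ i, h.eigenvalues i else 0

variable {n k₁ k₂ : ℕ}

/-- First block of columns of the design matrix. -/
def X1 (X : Matrix (Fin n) (Fin k₁ ⊕ Fin k₂) ℝ) : Matrix (Fin n) (Fin k₁) ℝ :=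
  X.submatrix id Sum.inl

/-- Second block of columns of the design matrix. -/
def X2 (X : Matrix (Fin n) (Fin k₁ ⊕ Fin k₂) ℝ) : Matrix (Fin n) (Fin k₂) ℝ :=
  X.submatrix id Sum.inr

/-- Unrestricted least squares estimator. -/
def betaU (X : Matrix (Fin n) (Fin k₁ ⊕ Fin k₂) ℝ) (Y : Fin n → ℝ) : (Fin k₁ ⊕ Fin k₂) → ℝ :=
  (Xᵀ * X)⁻¹.mulVec (Xᵀ.mulVec Y)

/-- Restricted least squares estimator. -/
def betaR (X : Matrix (Fin n) (Fin k₁ ⊕ Fin k₂) ℝ) (Y : Fin n → ℝ) : (Fin k₁ ⊕ Fin k₂) → ℝ :=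
  Sum.elim (((X1 X)ᵀ * X1 X)⁻¹.mulVec ((X1 X)ᵀ.mulVec Y)) (fun _ => 0)

/-- Risk estimate of the restricted model. -/
def rR (X : Matrix (Fin n) (Fin k₁ ⊕ Fin k₂) ℝ) (σ2 : ℝ) (Y : Fin n → ℝ) : ℝ :=
  Y ⬝ᵥ Y - betaR X Y ⬝ᵥ (Xᵀ * X).mulVec (betaR X Y) + σ2 * (2 * k₁ - n)

/-- Risk estimate of the unrestricted model. -/
def rU (X : Matrix (Fin n) (Fin k₁ ⊕ Fin k₂) ℝ) (σ2 : ℝ) (Y : Fin n → ℝ) : ℝ :=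
  Y ⬝ᵥ Y - betaU X Y ⬝ᵥ (Xᵀ * X).mulVec (betaU X Y) + σ2 * (2 * (k₁ + k₂) - n)

/-- The model averaging weight `λ̂`. -/
def lamHat (α σ2 : ℝ) (X : Matrix (Fin n) (Fin k₁ ⊕ Fin k₂) ℝ) (Y : Fin n → ℝ) : ℝ :=
  Real.exp (-(α * rR X σ2 Y) / σ2) /
    (Real.exp (-(α * rR X σ2 Y) / σ2) + Real.exp (-(α * rU X σ2 Y) / σ2))

/-- Leung and Barron's model averaging estimator `β̃`. -/
def mavg (α σ2 : ℝ) (X : Matrix (Fin n) (Fin k₁ ⊕ Fin k₂) ℝ) (Y : Fin n → ℝ) :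
    (Fin k₁ ⊕ Fin k₂) → ℝ :=
  lamHat α σ2 X Y • betaR X Y + (1 - lamHat α σ2 X Y) • betaU X Y

/-- Projection on the column space of `X₁`. -/
def projR (X : Matrix (Fin n) (Fin k₁ ⊕ Fin k₂) ℝ) : Matrix (Fin n) (Fin n) ℝ :=
  X1 X * ((X1 X)ᵀ * X1 X)⁻¹ * (X1 X)ᵀ

/-- Projection on the column space of `X`. -/
def projU (X : Matrix (Fin n) (Fin k₁ ⊕ Fin k₂) ℝ) : Matrix (Fin n) (Fin n) ℝ :=
  X * (Xᵀ * X)⁻¹ * Xᵀ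

/-- The distribution `P_{n,β,σ}` of `Y = Xβ + u`, `u ~ N(0, σ² Iₙ)`. -/
def Pmeas (X : Matrix (Fin n) (Fin k₁ ⊕ Fin k₂) ℝ) (β : (Fin k₁ ⊕ Fin k₂) → ℝ) (σ2 : ℝ) :
    Measure (Fin n → ℝ) :=
  (gaussPi (Fin n) σ2).map (fun u => X.mulVec β + u)

/-- The function `h_{a,b}(ξ) = ξ / (1 + a exp(−ξ²/b))`. -/
def hfun (a b ξ : ℝ) : ℝ := ξ / (1 + a * Real.exp (-ξ ^ 2 / b))

/-- The inverse `g_{a,b}` of `h_{a,b}`. -/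
def gfun (a b : ℝ) : ℝ → ℝ := Function.invFun (hfun a b)

open Classical in
/-- `g(‖w‖) w / ‖w‖`, with the convention that this is `0` for `w = 0`. -/
def gdir (a b : ℝ) {ι : Type*} [Fintype ι] (w : ι → ℝ) : ι → ℝ :=
  if w = 0 then 0 else (gfun a b (enorm2 w) / enorm2 w) • w


/-- The finite-sample density `f_{n,β,σ}` of `√n(β̃ − β)` (Theorem 3 of the paper). -/
def fdens {n k₁ k₂ : ℕ} (X : Matrix (Fin n) (Fin k₁ ⊕ Fin k₂) ℝ)
    (β : (Fin k₁ ⊕ Fin k₂) → ℝ) (σ2 α : ℝ) (t : (Fin k₁ ⊕ Fin k₂) → ℝ) : ℝ :=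
  let a := Real.exp (2 * α * k₂)
  let b := σ2 / α
  let S := (X2 X)ᵀ * (1 - projR X) * X2 X
  let w := (Real.sqrt n)⁻¹ • (msqrt S).mulVec ((t ∘ Sum.inr) + Real.sqrt n • (β ∘ Sum.inr))
  (2 * π * σ2) ^ (-((k₁ : ℝ) + k₂) / 2) * Real.sqrt (((n : ℝ)⁻¹ • (Xᵀ * X)).det) *
    Real.exp (-(enorm2 ((Real.sqrt n)⁻¹ •
        ((msqrt ((X1 X)ᵀ * X1 X)).mulVec (t ∘ Sum.inl) +
          ((msqrt ((X1 X)ᵀ * X1 X))⁻¹ * (X1 X)ᵀ * X2 X).mulVec (t ∘ Sum.inr)))) ^ 2 /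
      (2 * σ2)) *
    (1 + Real.exp (-(α / σ2) * gfun a b (enorm2 w) ^ 2 + 2 * α * k₂)) ^ (k₂ : ℕ) *
    (1 + (2 * α / σ2) * gfun a b (enorm2 w) ^ 2 *
        (1 + Real.exp ((α / σ2) * gfun a b (enorm2 w) ^ 2 - 2 * α * k₂))⁻¹)⁻¹ *
    Real.exp (-(enorm2 (gdir a b w - (msqrt S).mulVec (β ∘ Sum.inr))) ^ 2 / (2 * σ2))

/-- The density `f_{∞,γ}` of the limiting distribution (formula (13) of the paper),
stated for a general symmetric positive definite matrix in place of `Q`. -/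
def fInfty {k₁ k₂ : ℕ} (Q : Matrix (Fin k₁ ⊕ Fin k₂) (Fin k₁ ⊕ Fin k₂) ℝ) (σ2 α : ℝ)
    (γ : Fin k₂ → ℝ) (t : (Fin k₁ ⊕ Fin k₂) → ℝ) : ℝ :=
  let a := Real.exp (2 * α * k₂)
  let b := σ2 / α
  let S := Q.toBlocks₂₂ - Q.toBlocks₂₁ * Q.toBlocks₁₁⁻¹ * Q.toBlocks₁₂
  let w := (msqrt S).mulVec ((t ∘ Sum.inr) + γ)
  (2 * π * σ2) ^ (-((k₁ : ℝ) + k₂) / 2) * Real.sqrt Q.det *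
    Real.exp (-(enorm2 ((msqrt Q.toBlocks₁₁).mulVec (t ∘ Sum.inl) +
        ((msqrt Q.toBlocks₁₁)⁻¹ * Q.toBlocks₁₂).mulVec (t ∘ Sum.inr))) ^ 2 / (2 * σ2)) *
    (1 + Real.exp (-(α / σ2) * gfun a b (enorm2 w) ^ 2 + 2 * α * k₂)) ^ (k₂ : ℕ) *
    (1 + (2 * α / σ2) * gfun a b (enorm2 w) ^ 2 *
        (1 + Real.exp ((α / σ2) * gfun a b (enorm2 w) ^ 2 - 2 * α * k₂))⁻¹)⁻¹ *
    Real.exp (-(enorm2 (gdir a b w - (msqrt S).mulVec γ)) ^ 2 / (2 * σ2))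


/-- The limiting law (12): the distribution of
`B_∞γ + C_∞Z₁ + [1 + exp(2αk₂) exp(−α‖Z₂ + (Q₂₂ − Q₂₁Q₁₁⁻¹Q₁₂)^{1/2}γ‖²/σ²)]⁻¹
  · (D_∞Z₂ − B_∞γ)` with `Z₁ ~ N(0, σ²I_{k₁})`, `Z₂ ~ N(0, σ²I_{k₂})` independent. -/
def limitLaw {k₁ k₂ : ℕ} (Q : Matrix (Fin k₁ ⊕ Fin k₂) (Fin k₁ ⊕ Fin k₂) ℝ) (σ2 α : ℝ)
    (γ : Fin k₂ → ℝ) : Measure ((Fin k₁ ⊕ Fin k₂) → ℝ) :=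
  ((gaussPi (Fin k₁) σ2).prod (gaussPi (Fin k₂) σ2)).map
    (fun Z : (Fin k₁ → ℝ) × (Fin k₂ → ℝ) =>
      (fromRows (Q.toBlocks₁₁⁻¹ * Q.toBlocks₁₂) (-1)).mulVec γ +
      (fromRows (msqrt Q.toBlocks₁₁)⁻¹ 0).mulVec Z.1 +
      (1 + Real.exp (2 * α * k₂) *
          Real.exp (-α * (enorm2 (Z.2 +
            (msqrt (Q.toBlocks₂₂ - Q.toBlocks₂₁ * Q.toBlocks₁₁⁻¹ * Q.toBlocks₁₂)).mulVec
              γ)) ^ 2 / σ2))⁻¹ •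
        ((fromRows
            (-(Q.toBlocks₁₁⁻¹ * Q.toBlocks₁₂ *
              (msqrt (Q.toBlocks₂₂ - Q.toBlocks₂₁ * Q.toBlocks₁₁⁻¹ * Q.toBlocks₁₂))⁻¹))
            ((msqrt (Q.toBlocks₂₂ - Q.toBlocks₂₁ * Q.toBlocks₁₁⁻¹ * Q.toBlocks₁₂))⁻¹)).mulVec
            Z.2 -
          (fromRows (Q.toBlocks₁₁⁻¹ * Q.toBlocks₁₂) (-1)).mulVec γ))



section helpers8

lemma h8_map_withDensity {ι : Type*} [Fintype ι] (F : (ι → ℝ) → (ι → ℝ))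
    (F' : (ι → ℝ) → ((ι → ℝ) →L[ℝ] (ι → ℝ)))
    (hF : ∀ x, HasFDerivAt F (F' x) x) (hb : Function.Bijective F)
    (p q : (ι → ℝ) → ℝ≥0∞)
    (h : ∀ x, p x = ENNReal.ofReal |(F' x).det| * q (F x)) :
    (volume.withDensity p).map F = volume.withDensity q := by
  have hc : Continuous F := continuous_iff_continuousAt.2 fun x => (hF x).continuousAt
  ext s hs
  rw [Measure.map_apply hc.measurable hs, withDensity_apply _ (hc.measurable hs),
    withDensity_apply _ hs]
  have := lintegral_image_eq_lintegral_abs_det_fderiv_mul volume (hc.measurable hs)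
    (fun x _ => (hF x).hasFDerivWithinAt) hb.1.injOn q
  rw [Set.image_preimage_eq _ hb.2] at this
  rw [this]
  exact lintegral_congr fun x => h x

lemma h8_msqrt_mul {ι : Type*} [Fintype ι] [DecidableEq ι] (A : Matrix ι ι ℝ)
    (hA : A.PosSemidef) : msqrt A * msqrt A = A := by
  have hU : star (hA.1.eigenvectorUnitary : Matrix ι ι ℝ) * (hA.1.eigenvectorUnitary : Matrix ι ι ℝ) = 1 :=
    Unitary.coe_star_mul_self _
  conv_rhs => rw [hA.1.spectral_theorem, Unitary.conjStarAlgAut_apply]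
  rw [msqrt, dif_pos hA]
  set U := (hA.1.eigenvectorUnitary : Matrix ι ι ℝ)
  set D := diagonal ((RCLike.ofReal : ℝ → ℝ) ∘ Real.sqrt ∘ hA.1.eigenvalues) with hD
  have hDD : D * D = diagonal ((RCLike.ofReal : ℝ → ℝ) ∘ hA.1.eigenvalues) := by
    rw [hD, diagonal_mul_diagonal]
    congr 1
    funext i
    simp [Real.mul_self_sqrt (hA.eigenvalues_nonneg i)]
  rw [← hDD]
  calc U * D * star U * (U * D * star U) = U * D * (star U * U) * D * star U := by noncomm_ring
    _ = U * (D * D) * star U := by rw [hU]; noncomm_ring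

lemma h8_det {ι : Type*} [Fintype ι] [DecidableEq ι] (A : Matrix ι ι ℝ)
    (hA : A.PosSemidef) : |(msqrt A).det| = Real.sqrt A.det := by
  conv_rhs => rw [← h8_msqrt_mul A hA, det_mul]
  rw [Real.sqrt_mul_self_eq_abs]

lemma h8_schur {m n : Type*} [Fintype m] [Fintype n] [DecidableEq m] [DecidableEq n]
    (Q : Matrix (m ⊕ n) (m ⊕ n) ℝ) (hQ : Q.PosDef) :
    Q.toBlocks₁₁.PosDef ∧
    (Q.toBlocks₂₂ - Q.toBlocks₂₁ * Q.toBlocks₁₁⁻¹ * Q.toBlocks₁₂).PosSemidef ∧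
    Q.det = Q.toBlocks₁₁.det *
      (Q.toBlocks₂₂ - Q.toBlocks₂₁ * Q.toBlocks₁₁⁻¹ * Q.toBlocks₁₂).det := by
  have h11 : Q.toBlocks₁₁.PosDef := hQ.submatrix (e := Sum.inl) Sum.inl_injective
  have hdet : IsUnit Q.toBlocks₁₁.det := h11.det_pos.ne'.isUnit
  let _ : Invertible Q.toBlocks₁₁ := Matrix.invertibleOfIsUnitDet _ hdet
  have h21 : Q.toBlocks₂₁ = Q.toBlocks₁₂ᴴ := by
    ext i j
    have := congrFun (congrFun hQ.1 (Sum.inr i)) (Sum.inl j)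
    simp [toBlocks₂₁, toBlocks₁₂] at this ⊢
    exact this.symm
  refine ⟨h11, ?_, ?_⟩
  · have := (Matrix.PosDef.fromBlocks₁₁ Q.toBlocks₁₂ Q.toBlocks₂₂ h11).1
    rw [← h21, fromBlocks_toBlocks] at this
    exact this hQ.posSemidef
  · conv_lhs => rw [← fromBlocks_toBlocks Q, det_fromBlocks₁₁, invOf_eq_nonsing_inv]

lemma h8_hderiv (a b : ℝ) (ha : 0 < a) (x : ℝ) :
    HasDerivAt (hfun a b) ((1 + a * Real.exp (-x ^ 2 / b))⁻¹ *
      (1 + 2 / b * x ^ 2 * (a * Real.exp (-x ^ 2 / b)) * (1 + a * Real.exp (-x ^ 2 / b))⁻¹)) x := by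
  have hpos : (0:ℝ) < 1 + a * Real.exp (-x ^ 2 / b) := by positivity
  have h1 : HasDerivAt (fun x : ℝ => 1 + a * Real.exp (-x ^ 2 / b))
      (a * (Real.exp (-x ^ 2 / b) * (-(2 * x) / b))) x := by
    have := ((((hasDerivAt_pow 2 x).neg.div_const b).exp).const_mul a).const_add 1
    simpa using this
  have := (hasDerivAt_id x).div h1 hpos.ne'
  refine this.congr_deriv ?_
  simp only [id]
  field_simp
  ring

lemma h8_hbij (a b : ℝ) (ha : 0 < a) (hb : 0 < b) : Function.Bijective (hfun a b) := by
  have hmono : StrictMono (hfun a b) := by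
    refine strictMono_of_deriv_pos fun x => ?_
    rw [(h8_hderiv a b ha x).deriv]
    positivity
  refine ⟨hmono.injective, ?_⟩
  have hcont : Continuous (hfun a b) :=
    continuous_iff_continuousAt.2 fun x => (h8_hderiv a b ha x).continuousAt
  have hexp : ∀ x : ℝ, Real.exp (-x ^ 2 / b) ≤ 1 := fun x => by
    rw [Real.exp_le_one_iff]
    have : 0 ≤ x ^ 2 / b := by positivity
    have h2 : -x ^ 2 / b = -(x ^ 2 / b) := by ring
    linarith
  refine hcont.surjective ?_ ?_
  · refine tendsto_atTop_mono' _ ?_ (tendsto_id.atTop_div_const (show (0:ℝ) < 1 + a by positivity))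
    filter_upwards [eventually_ge_atTop 0] with x hx
    simp only [id, hfun]
    have := hexp x
    gcongr
    nlinarith
  · refine tendsto_atBot_mono' _ ?_ (tendsto_id.atBot_div_const (show (0:ℝ) < 1 + a by positivity))
    filter_upwards [eventually_le_atBot 0] with x hx
    simp only [id, hfun]
    have h1 := hexp x
    have h2 : -x / (1 + a) ≤ -x / (1 + a * Real.exp (-x ^ 2 / b)) := by
      have : 0 ≤ -x := by linarith
      gcongr
      nlinarith
    rw [neg_div, neg_div] at h2
    linarith

lemma h8_g_h (a b : ℝ) (ha : 0 < a) (hb : 0 < b) (x : ℝ) : gfun a b (hfun a b x) = x :=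
  Function.leftInverse_invFun (h8_hbij a b ha hb).1 x

lemma h8_h_g (a b : ℝ) (ha : 0 < a) (hb : 0 < b) (x : ℝ) : hfun a b (gfun a b x) = x :=
  Function.rightInverse_invFun (h8_hbij a b ha hb).2 x

lemma h8_enorm_nonneg {ι : Type*} [Fintype ι] (v : ι → ℝ) : 0 ≤ enorm2 v := Real.sqrt_nonneg _

lemma h8_enorm_sq {ι : Type*} [Fintype ι] (v : ι → ℝ) : enorm2 v ^ 2 = ∑ i, v i ^ 2 :=
  Real.sq_sqrt (Finset.sum_nonneg fun _ _ => sq_nonneg _)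

lemma h8_enorm_smul {ι : Type*} [Fintype ι] (c : ℝ) (hc : 0 ≤ c) (v : ι → ℝ) :
    enorm2 (c • v) = c * enorm2 v := by
  rw [← sq_eq_sq₀ (h8_enorm_nonneg _) (mul_nonneg hc (h8_enorm_nonneg _)), mul_pow,
    h8_enorm_sq, h8_enorm_sq, Finset.mul_sum]
  simp [mul_pow]

lemma h8_enorm_eq_zero {ι : Type*} [Fintype ι] (v : ι → ℝ) : enorm2 v = 0 ↔ v = 0 := by
  rw [← sq_eq_zero_iff, h8_enorm_sq, Finset.sum_eq_zero_iff_of_nonneg (fun _ _ => sq_nonneg _)]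
  simp [funext_iff]

/-- The shrinkage factor. -/
def h8lam (a b : ℝ) {ι : Type*} [Fintype ι] (y : ι → ℝ) : ℝ :=
  (1 + a * Real.exp (-(enorm2 y) ^ 2 / b))⁻¹

/-- The vector version of `hfun`. -/
def h8H (a b : ℝ) {ι : Type*} [Fintype ι] (y : ι → ℝ) : ι → ℝ := h8lam a b y • y

lemma h8lam_pos (a b : ℝ) (ha : 0 < a) {ι : Type*} [Fintype ι] (y : ι → ℝ) :
    0 < h8lam a b y := by
  unfold h8lam; positivity

lemma h8_enorm_H (a b : ℝ) (ha : 0 < a) {ι : Type*} [Fintype ι] (y : ι → ℝ) :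
    enorm2 (h8H a b y) = hfun a b (enorm2 y) := by
  rw [h8H, h8_enorm_smul _ (h8lam_pos a b ha y).le, hfun, h8lam]
  exact (div_eq_inv_mul _ _).symm

lemma h8_gdir_H (a b : ℝ) (ha : 0 < a) (hb : 0 < b) {ι : Type*} [Fintype ι] (y : ι → ℝ) :
    gdir a b (h8H a b y) = y := by
  have hl := h8lam_pos a b ha y
  by_cases hy : y = 0
  · simp [gdir, h8H, hy]
  · have hH : h8H a b y ≠ 0 := smul_ne_zero hl.ne' hy
    have he : enorm2 y ≠ 0 := fun h => hy ((h8_enorm_eq_zero y).1 h)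
    rw [gdir, if_neg hH, h8_enorm_H a b ha, h8_g_h a b ha hb, ← h8_enorm_H a b ha, h8H,
      h8_enorm_smul _ hl.le, smul_smul]
    have : enorm2 y / (h8lam a b y * enorm2 y) * h8lam a b y = 1 := by field_simp
    rw [this, one_smul]

lemma h8_H_gdir (a b : ℝ) (ha : 0 < a) (hb : 0 < b) {ι : Type*} [Fintype ι] (w : ι → ℝ) :
    h8H a b (gdir a b w) = w := by
  by_cases hw : w = 0
  · simp [gdir, h8H, hw]
  · have he : enorm2 w ≠ 0 := fun h => hw ((h8_enorm_eq_zero w).1 h)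
    have he' : 0 < enorm2 w := lt_of_le_of_ne (h8_enorm_nonneg _) he.symm
    have hg : hfun a b (gfun a b (enorm2 w)) = enorm2 w := h8_h_g a b ha hb _
    have hg0 : 0 ≤ gfun a b (enorm2 w) := by
      by_contra hneg
      push Not at hneg
      have : hfun a b (gfun a b (enorm2 w)) ≤ 0 :=
        div_nonpos_of_nonpos_of_nonneg hneg.le (by positivity)
      linarith
    rw [gdir, if_neg hw, h8H, h8lam, h8_enorm_smul _ (by positivity), smul_smul,
      div_mul_cancel₀ _ he]
    rw [hfun] at hg
    have : (1 + a * Real.exp (-gfun a b (enorm2 w) ^ 2 / b))⁻¹ * (gfun a b (enorm2 w) / enorm2 w) = 1 := by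
      rw [← mul_div_assoc, ← div_eq_inv_mul, hg, div_self he]
    rw [this, one_smul]

/-- Jacobian matrix of `h8H`. -/
def h8J (a b : ℝ) {ι : Type*} [Fintype ι] [DecidableEq ι] (y : ι → ℝ) : Matrix ι ι ℝ :=
  h8lam a b y • (1 + replicateCol Unit ((2 / b * (1 - h8lam a b y)) • y) * replicateRow Unit y)

lemma h8_J_mulVec (a b : ℝ) {ι : Type*} [Fintype ι] [DecidableEq ι] (y v : ι → ℝ) :
    (h8J a b y).mulVec v =
      h8lam a b y • (v + ((2 / b * (1 - h8lam a b y)) * (y ⬝ᵥ v)) • y) := by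
  rw [h8J, smul_mulVec, add_mulVec, one_mulVec, ← mulVec_mulVec]
  congr 2
  ext i
  simp [mulVec, dotProduct, replicateRow, replicateCol]
  ring

lemma h8_H_deriv (a b : ℝ) (ha : 0 < a) {ι : Type*} [Fintype ι] [DecidableEq ι] (y : ι → ℝ) :
    HasFDerivAt (h8H a b) (LinearMap.toContinuousLinearMap (toLin' (h8J a b y))) y := by
  have hpos : (0:ℝ) < 1 + a * Real.exp (-(∑ i, y i ^ 2) / b) := by positivity
  have hs : HasFDerivAt (fun y : ι → ℝ => ∑ i, y i ^ 2)
      (∑ i, (2 * y i) • (ContinuousLinearMap.proj i : (ι → ℝ) →L[ℝ] ℝ)) y := by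
    refine HasFDerivAt.fun_sum fun i _ => ?_
    have := (hasFDerivAt_apply (𝕜 := ℝ) i y).pow 2
    simpa using this
  have hl : HasFDerivAt (𝕜 := ℝ) (fun y : ι → ℝ => h8lam a b y) ((h8lam a b y * (1 - h8lam a b y) / b) • ∑ i, (2 * y i) • (ContinuousLinearMap.proj i : (ι → ℝ) →L[ℝ] ℝ)) y := by
    have h1 : HasDerivAt (fun s : ℝ => (1 + a * Real.exp (-s / b))⁻¹)
      (h8lam a b y * (1 - h8lam a b y) / b) (∑ i, y i ^ 2) := by
      have h0 := ((((hasDerivAt_id (∑ i, y i ^ 2)).neg.div_const b).exp.const_mul a).const_add 1)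
      have := h0.inv (by simpa using hpos.ne')
      refine this.congr_deriv ?_
      simp only [h8lam, h8_enorm_sq, id, Pi.neg_apply]
      field_simp
      ring
    have h2 := h1.comp_hasFDerivAt y hs
    refine h2.congr_of_eventuallyEq (Eventually.of_forall fun z => ?_)
    simp [h8lam, h8_enorm_sq]
  have := hl.smul (hasFDerivAt_id y)
  refine this.congr_fderiv ?_
  ext v i
  have hv := congrFun (h8_J_mulVec a b y v) i
  simp only [LinearMap.coe_toContinuousLinearMap', toLin'_apply, hv]
  simp only [ContinuousLinearMap.add_apply, Pi.add_apply]
  simp [dotProduct, Finset.mul_sum, mul_assoc]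
  simp only [← Finset.mul_sum]
  ring

lemma h8_J_det (a b : ℝ) {ι : Type*} [Fintype ι] [DecidableEq ι] (y : ι → ℝ) :
    (h8J a b y).det = h8lam a b y ^ Fintype.card ι *
      (1 + 2 / b * (1 - h8lam a b y) * enorm2 y ^ 2) := by
  rw [h8J, det_smul, det_one_add_replicateCol_mul_replicateRow, h8_enorm_sq, dotProduct_smul,
    dotProduct]
  simp [pow_two]

end helpers8

section helpers8b

variable {k₁ k₂ : ℕ}

/-- Blockwise transformation. -/
def h8K (a b : ℝ) (c : Fin k₂ → ℝ) (x : Fin k₁ ⊕ Fin k₂ → ℝ) : Fin k₁ ⊕ Fin k₂ → ℝ :=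
  Sum.elim (x ∘ Sum.inl) (h8H a b (x ∘ Sum.inr + c))

lemma h8_K_bij (a b : ℝ) (ha : 0 < a) (hb : 0 < b) (c : Fin k₂ → ℝ) :
    Function.Bijective (h8K (k₁ := k₁) a b c) := by
  refine Function.bijective_iff_has_inverse.2
    ⟨fun w => Sum.elim (w ∘ Sum.inl) (gdir a b (w ∘ Sum.inr) - c), fun x => ?_, fun w => ?_⟩
  · simp only [h8K, Sum.elim_comp_inl, Sum.elim_comp_inr, h8_gdir_H a b ha hb, add_sub_cancel_right]
    ext (i | i) <;> rfl
  · simp only [h8K, Sum.elim_comp_inl, Sum.elim_comp_inr, sub_add_cancel, h8_H_gdir a b ha hb]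
    ext (i | i) <;> rfl

lemma h8_K_deriv (a b : ℝ) (ha : 0 < a) (c : Fin k₂ → ℝ) (x : Fin k₁ ⊕ Fin k₂ → ℝ) :
    HasFDerivAt (h8K a b c) (LinearMap.toContinuousLinearMap
      (toLin' (fromBlocks 1 0 0 (h8J a b (x ∘ Sum.inr + c))))) x := by
  have hr : HasFDerivAt (fun x : Fin k₁ ⊕ Fin k₂ → ℝ => x ∘ Sum.inr + c)
      (ContinuousLinearMap.pi fun i : Fin k₂ =>
        (ContinuousLinearMap.proj (Sum.inr i) : (Fin k₁ ⊕ Fin k₂ → ℝ) →L[ℝ] ℝ)) x := by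
    refine HasFDerivAt.add_const c ?_
    exact (ContinuousLinearMap.pi fun i : Fin k₂ =>
        (ContinuousLinearMap.proj (Sum.inr i) : (Fin k₁ ⊕ Fin k₂ → ℝ) →L[ℝ] ℝ)).hasFDerivAt
  have hH := (h8_H_deriv a b ha (x ∘ Sum.inr + c)).comp x hr
  rw [hasFDerivAt_pi'] at hH ⊢
  rintro (i | i)
  · refine (hasFDerivAt_apply (𝕜 := ℝ) (Sum.inl i : Fin k₁ ⊕ Fin k₂) x).congr_fderiv ?_
    ext v
    simp [fromBlocks_mulVec]
  · refine (hH i).congr_fderiv ?_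
    ext v
    simp [fromBlocks_mulVec]
    rfl

lemma h8_main (a b : ℝ) (ha : 0 < a) (hb : 0 < b) (c : Fin k₂ → ℝ)
    (M : Matrix (Fin k₁ ⊕ Fin k₂) (Fin k₁ ⊕ Fin k₂) ℝ) (hM : M.det ≠ 0)
    (d : Fin k₁ ⊕ Fin k₂ → ℝ) (p q : (Fin k₁ ⊕ Fin k₂ → ℝ) → ℝ≥0∞)
    (h : ∀ x, p x = ENNReal.ofReal (|M.det| * (h8lam a b (x ∘ Sum.inr + c) ^ k₂ *
      (1 + 2 / b * (1 - h8lam a b (x ∘ Sum.inr + c)) * enorm2 (x ∘ Sum.inr + c) ^ 2))) *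
        q (M.mulVec (h8K a b c x) + d)) :
    (volume.withDensity p).map (fun x => M.mulVec (h8K a b c x) + d) = volume.withDensity q := by
  refine h8_map_withDensity _
    (fun x => (LinearMap.toContinuousLinearMap (toLin' M)).comp (LinearMap.toContinuousLinearMap
      (toLin' (fromBlocks 1 0 0 (h8J a b (x ∘ Sum.inr + c)))))) (fun x => ?_) ?_ p q (fun x => ?_)
  · exact (((LinearMap.toContinuousLinearMap (toLin' M)).hasFDerivAt).comp x
      (h8_K_deriv a b ha c x)).add_const d
  · have hMb : Function.Bijective (fun x => M.mulVec x) :=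
      ⟨mulVec_injective_iff_isUnit.2 ((isUnit_iff_isUnit_det _).2 hM.isUnit),
        mulVec_surjective_iff_isUnit.2 ((isUnit_iff_isUnit_det _).2 hM.isUnit)⟩
    exact ((Equiv.addRight d).bijective.comp hMb).comp (h8_K_bij a b ha hb c)
  · rw [h x]
    congr 2
    have hl := h8lam_pos a b ha (x ∘ Sum.inr + c)
    have hl1 : h8lam a b (x ∘ Sum.inr + c) ≤ 1 := inv_le_one_of_one_le₀ (by
      have : 0 ≤ a * Real.exp (-(enorm2 (x ∘ Sum.inr + c)) ^ 2 / b) := by positivity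
      linarith)
    have hl2 : 0 ≤ 1 - h8lam a b (x ∘ Sum.inr + c) := by linarith
    rw [ContinuousLinearMap.det, ContinuousLinearMap.toLinearMap_comp, LinearMap.det_comp]
    simp only [LinearMap.coe_toContinuousLinearMap, LinearMap.det_toLin']
    rw [det_fromBlocks_zero₂₁, det_one, one_mul, h8_J_det, abs_mul, Fintype.card_fin]
    congr 1
    refine (abs_of_nonneg ?_).symm
    positivity

lemma h8_prod (σ2 : ℝ) (hσ : 0 < σ2) (G : (Fin k₁ → ℝ) × (Fin k₂ → ℝ) → (Fin k₁ ⊕ Fin k₂ → ℝ))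
    (hG : Measurable G) :
    ((gaussPi (Fin k₁) σ2).prod (gaussPi (Fin k₂) σ2)).map G =
    (volume.withDensity (fun x : Fin k₁ ⊕ Fin k₂ → ℝ => ENNReal.ofReal
      ((2 * π * σ2) ^ (-((k₁ : ℝ) + k₂) / 2) * (Real.exp (-(enorm2 (x ∘ Sum.inl)) ^ 2 / (2 * σ2)) *
        Real.exp (-(enorm2 (x ∘ Sum.inr)) ^ 2 / (2 * σ2)))))).map
      (fun x => G (x ∘ Sum.inl, x ∘ Sum.inr)) := by
  have hm : ∀ k : ℕ, Measurable (fun x : Fin k → ℝ => ENNReal.ofReal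
    ((2 * π * σ2) ^ (-(Fintype.card (Fin k) : ℝ) / 2) *
      Real.exp (-(enorm2 x) ^ 2 / (2 * σ2)))) := by
    intro k
    unfold enorm2
    fun_prop
  rw [gaussPi, gaussPi, prod_withDensity (hm _) (hm _)]
  have he := volume_measurePreserving_sumPiEquivProdPi (fun _ : Fin k₁ ⊕ Fin k₂ => ℝ)
  have h1 : (fun x : Fin k₁ ⊕ Fin k₂ → ℝ => G (x ∘ Sum.inl, x ∘ Sum.inr)) =
    G ∘ (MeasurableEquiv.sumPiEquivProdPi (fun _ : Fin k₁ ⊕ Fin k₂ => ℝ)) := rfl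
  rw [h1, ← Measure.map_map hG (MeasurableEquiv.measurable _)]
  congr 1
  ext s hs
  rw [Measure.map_apply (MeasurableEquiv.measurable _) hs, withDensity_apply _ hs,
    withDensity_apply _ ((MeasurableEquiv.measurable _) hs), ← Measure.volume_eq_prod,
    ← he.setLIntegral_comp_preimage_emb (MeasurableEquiv.measurableEmbedding _)]
  refine lintegral_congr fun x => ?_
  rw [← ENNReal.ofReal_mul (by positivity)]
  congr 1
  have hx : (MeasurableEquiv.sumPiEquivProdPi (fun _ : Fin k₁ ⊕ Fin k₂ => ℝ)) x =
    (x ∘ Sum.inl, x ∘ Sum.inr) := rfl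
  have hpw : (2 * π * σ2) ^ (-((k₁ : ℝ) + k₂) / 2) =
    (2 * π * σ2) ^ (-(k₁ : ℝ) / 2) * (2 * π * σ2) ^ (-(k₂ : ℝ) / 2) := by
    rw [← Real.rpow_add (by positivity)]
    congr 1
    ring
  rw [hx, hpw, Fintype.card_fin, Fintype.card_fin]
  ring

end helpers8b
/-- the limiting law (12) is absolutely continuous with respect to Lebesgue
measure on `ℝ^k` with density `f_{∞,γ}` given by formula (13). -/
theorem statement8 {k₁ k₂ : ℕ} (hk₁ : 0 < k₁) (hk₂ : 0 < k₂)
    (Q : Matrix (Fin k₁ ⊕ Fin k₂) (Fin k₁ ⊕ Fin k₂) ℝ) (hQ : Q.PosDef)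
    (σ α : ℝ) (hσ : 0 < σ) (hα : 0 < α) (γ : Fin k₂ → ℝ) :
    limitLaw Q (σ ^ 2) α γ =
      volume.withDensity (fun t => ENNReal.ofReal (fInfty Q (σ ^ 2) α γ t)) := by

  obtain ⟨h11, hS, hdet⟩ := h8_schur Q hQ
  have hQpos := hQ.det_pos
  have h11pos := h11.det_pos
  have hRR := h8_msqrt_mul _ h11.posSemidef
  have hTT := h8_msqrt_mul _ hS
  have hRd := h8_det _ h11.posSemidef
  have hTd := h8_det _ hS
  unfold limitLaw
  set S := Q.toBlocks₂₂ - Q.toBlocks₂₁ * Q.toBlocks₁₁⁻¹ * Q.toBlocks₁₂ with hSdef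
  have hSpos : 0 < S.det := by
    rw [hdet] at hQpos
    exact pos_of_mul_pos_right hQpos h11pos.le
  set R := msqrt Q.toBlocks₁₁ with hRdef
  set T := msqrt S with hTdef
  set A := Q.toBlocks₁₁⁻¹ * Q.toBlocks₁₂ with hA
  have hRne : R.det ≠ 0 := by
    intro h0
    rw [h0, abs_zero] at hRd
    exact (Real.sqrt_pos.2 h11pos).ne hRd
  have hTne : T.det ≠ 0 := by
    intro h0
    rw [h0, abs_zero] at hTd
    exact (Real.sqrt_pos.2 hSpos).ne hTd
  have hRA : R * A = R⁻¹ * Q.toBlocks₁₂ := by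
    rw [hA, ← hRR, Matrix.mul_inv_rev, ← Matrix.mul_assoc, ← Matrix.mul_assoc,
      Matrix.mul_nonsing_inv _ hRne.isUnit, Matrix.one_mul]
  have hσ2 : 0 < σ ^ 2 := by positivity
  set a := Real.exp (2 * α * k₂) with ha_def
  set b := σ ^ 2 / α with hb_def
  have ha : 0 < a := Real.exp_pos _
  have hb : 0 < b := by positivity
  rw [h8_prod _ hσ2]
  swap
  · unfold enorm2
    fun_prop
  set M : Matrix (Fin k₁ ⊕ Fin k₂) (Fin k₁ ⊕ Fin k₂) ℝ := fromBlocks R⁻¹ (-(A * T⁻¹)) 0 T⁻¹ with hM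
  set d : Fin k₁ ⊕ Fin k₂ → ℝ := Sum.elim (A.mulVec γ) (-γ) with hd
  have hMdet : M.det = R.det⁻¹ * T.det⁻¹ := by
    rw [hM, det_fromBlocks_zero₂₁, det_nonsing_inv, det_nonsing_inv]
    simp
  have hFin : ∀ x : Fin k₁ ⊕ Fin k₂ → ℝ, M.mulVec (h8K a b (T.mulVec γ) x) + d =
      Sum.elim (R⁻¹.mulVec (x ∘ Sum.inl) -
        A.mulVec (T⁻¹.mulVec (h8H a b (x ∘ Sum.inr + T.mulVec γ)) - γ))
        (T⁻¹.mulVec (h8H a b (x ∘ Sum.inr + T.mulVec γ)) - γ) := by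
    intro x
    rw [hM, hd, h8K, fromBlocks_mulVec]
    simp only [Sum.elim_comp_inl, Sum.elim_comp_inr]
    ext (i | i)
    · simp [mulVec_sub, neg_mulVec, mulVec_mulVec]
      ring
    · simp [sub_eq_add_neg]
  have hTiT : T⁻¹.mulVec (T.mulVec γ) = γ := by
    rw [mulVec_mulVec, Matrix.nonsing_inv_mul _ hTne.isUnit, one_mulVec]
  refine Eq.trans (Measure.map_congr (Eventually.of_forall fun x => ?_))
    (h8_main a b ha hb (T.mulVec γ) M (by rw [hMdet]; positivity) d _ _ (fun x => ?_))
  · simp only []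
    rw [hFin]
    have hlam : (1 + a * Real.exp (-α * (enorm2 (x ∘ Sum.inr + T.mulVec γ)) ^ 2 / σ ^ 2))⁻¹ =
        h8lam a b (x ∘ Sum.inr + T.mulVec γ) := by
      rw [h8lam, hb_def]
      congr 4
      field_simp
    simp only [hlam]
    rw [h8H]
    generalize h8lam a b (x ∘ Sum.inr + T.mulVec γ) = l
    rw [mulVec_smul, mulVec_add, hTiT, mulVec_sub, mulVec_smul, mulVec_add, mulVec_mulVec]
    simp only [fromRows_mulVec]
    ext (i | i)
    · simp [neg_mulVec]
      ring
    · simp [neg_mulVec]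
      ring
  · rw [hFin]
    set y := x ∘ Sum.inr + T.mulVec γ with hy
    have hl := h8lam_pos a b ha y
    rw [← ENNReal.ofReal_mul (by
      have hl1 : h8lam a b y ≤ 1 := inv_le_one_of_one_le₀ (by
        have : 0 ≤ a * Real.exp (-(enorm2 y) ^ 2 / b) := by positivity
        linarith)
      have hl2 : 0 ≤ 1 - h8lam a b y := by linarith
      positivity)]
    congr 1
    have hw : T.mulVec (T⁻¹.mulVec (h8H a b y) - γ + γ) = h8H a b y := by
      rw [sub_add_cancel, mulVec_mulVec, Matrix.mul_nonsing_inv _ hTne.isUnit, one_mulVec]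
    have hz : R.mulVec (R⁻¹.mulVec (x ∘ Sum.inl) - A.mulVec (T⁻¹.mulVec (h8H a b y) - γ)) +
        (R⁻¹ * Q.toBlocks₁₂).mulVec (T⁻¹.mulVec (h8H a b y) - γ) = x ∘ Sum.inl := by
      rw [mulVec_sub R, mulVec_mulVec, mulVec_mulVec, Matrix.mul_nonsing_inv _ hRne.isUnit,
        one_mulVec, hRA, sub_add_cancel]
    unfold fInfty
    simp only [Sum.elim_comp_inl, Sum.elim_comp_inr, ← hSdef, ← hRdef, ← hTdef, ← ha_def, ← hb_def]
    rw [hw, hz, h8_gdir_H a b ha hb, h8_enorm_H a b ha, h8_g_h a b ha hb]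
    have hyx : y - T.mulVec γ = x ∘ Sum.inr := by rw [hy, add_sub_cancel_right]
    rw [hyx, hMdet, abs_mul, abs_inv, abs_inv, hRd, hTd, hdet, Real.sqrt_mul h11pos.le]
    have hs1 := Real.sqrt_pos.2 h11pos
    have hs2 := Real.sqrt_pos.2 hSpos
    set E := a * Real.exp (-(enorm2 y) ^ 2 / b) with hE
    have hEpos : 0 < E := by positivity
    have hE1 : Real.exp (-(α / σ ^ 2) * enorm2 y ^ 2 + 2 * α * k₂) = E := by
      rw [hE, ha_def, hb_def, ← Real.exp_add]
      congr 1
      field_simp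
      ring
    have hE2 : Real.exp (α / σ ^ 2 * enorm2 y ^ 2 - 2 * α * k₂) = E⁻¹ := by
      rw [← hE1, ← Real.exp_neg]
      congr 1
      ring
    have hlE : h8lam a b y = (1 + E)⁻¹ := rfl
    rw [hE1, hE2, hlE]
    have hq : 2 / b * (1 - (1 + E)⁻¹) * enorm2 y ^ 2 =
        2 * α / σ ^ 2 * enorm2 y ^ 2 * (1 + E⁻¹)⁻¹ := by
      rw [hb_def]
      field_simp
      ring
    rw [hq, inv_pow]
    have hP : 0 < 1 + 2 * α / σ ^ 2 * enorm2 y ^ 2 * (1 + E⁻¹)⁻¹ := by positivity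
    generalize 1 + 2 * α / σ ^ 2 * enorm2 y ^ 2 * (1 + E⁻¹)⁻¹ = P at hP
    have hN : 0 < (1 + E) ^ k₂ := by positivity
    generalize (1 + E) ^ k₂ = N at hN
    generalize √Q.toBlocks₁₁.det = r at hs1
    generalize √S.det = s at hs2
    field_simp

end
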